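/- Let γ be the standard Gaussian measure on ℝⁿ and u : ℝⁿ → ℝ bounded with u ∈ BV(ℝⁿ, γ). Then ∫∫ |u(x) − u(e^{-t}x + √(1−e^{-2t})y)| dγ(x) dγ(y) ≤ c_t |D_γ u|(ℝⁿ), where c_t = √(2/π) ∫₀ᵗ e^{-s}/√(1−e^{-2s}) ds. -/

import Mathlib

open MeasureTheory Real
open scoped RealInnerProductSpace

noncomputable def stdGaussian (n : ℕ) : Measure (EuclideanSpace ℝ (Fin n)) :=
  volume.withDensity fun x => ENNReal.ofReal ((2 * π) ^ (-(n : ℝ) / 2) * Real.exp (-‖x‖ ^ 2 / 2))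

def IsC1b {E : Type*} [NormedAddCommGroup E] [NormedSpace ℝ E] (φ : E → ℝ) : Prop :=
  ContDiff ℝ 1 φ ∧ ∃ C, ∀ x, |φ x| ≤ C ∧ ‖fderiv ℝ φ x‖ ≤ C

/-- `u ∈ BV(ℝⁿ,γ)` with Gaussian derivative `D_γ u = ν σ` in polar form: `σ` is a finite positive
measure, `‖ν‖ = 1` `σ`-a.e., and the Gaussian integration-by-parts formula holds; `σ(ℝⁿ)` is the
total variation `|D_γ u|(ℝⁿ)`. -/
def IsGaussDeriv (n : ℕ) (u : EuclideanSpace ℝ (Fin n) → ℝ)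
    (σ : Measure (EuclideanSpace ℝ (Fin n)))
    (ν : EuclideanSpace ℝ (Fin n) → EuclideanSpace ℝ (Fin n)) : Prop :=
  IsFiniteMeasure σ ∧ (∀ᵐ x ∂σ, ‖ν x‖ = 1) ∧
  ∀ φ : EuclideanSpace ℝ (Fin n) → ℝ, IsC1b φ → ∀ h,
    ∫ x, u x * fderiv ℝ φ x h ∂(stdGaussian n) =
      -∫ x, φ x * ⟪ν x, h⟫ ∂σ + ∫ x, u x * φ x * ⟪h, x⟫ ∂(stdGaussian n)


open ProbabilityTheory in
lemma integral_abs_gaussianReal_aux : ∫ x, |x| ∂(gaussianReal 0 1) = Real.sqrt (2 / π) := by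
  rw [integral_gaussianReal_eq_integral_smul (by simp)]
  have h1 : ∀ x : ℝ, gaussianPDFReal 0 1 x • |x| =
      (fun r : ℝ => (√(2 * π))⁻¹ * (r ^ (1:ℝ) * Real.exp (-(1/2) * r ^ (2:ℝ)))) |x| := by
    intro x
    simp only [gaussianPDFReal, smul_eq_mul, Real.rpow_one, Real.rpow_two, sq_abs]
    simp
    ring_nf
  simp_rw [h1]
  rw [integral_comp_abs (f := fun r : ℝ => (√(2 * π))⁻¹ * (r ^ (1:ℝ) * Real.exp (-(1/2) * r ^ (2:ℝ))))]
  rw [integral_const_mul, integral_rpow_mul_exp_neg_mul_rpow (by norm_num) (by norm_num) (by norm_num)]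
  norm_num
  have h2 := Real.sq_sqrt (show (0:ℝ) ≤ 2 by norm_num)
  field_simp
  exact h2.symm

open ProbabilityTheory in
lemma gauss_eq (n : ℕ) : _root_.stdGaussian n = ProbabilityTheory.stdGaussian (EuclideanSpace ℝ (Fin n)) := by
  have hb : (0:ℝ) < (1/2 : ℂ).re := by norm_num
  have hcont : Continuous fun x : EuclideanSpace ℝ (Fin n) => ((2 * π) ^ (-(n : ℝ) / 2) * Real.exp (-‖x‖ ^ 2 / 2)) := by fun_prop
  have hch : ∀ w : EuclideanSpace ℝ (Fin n), ∫ x, Complex.exp (⟪x, w⟫ * Complex.I) ∂(_root_.stdGaussian n) = Complex.exp (-‖w‖^2/2) := by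
    intro w
    rw [_root_.stdGaussian, integral_withDensity_eq_integral_toReal_smul (by fun_prop) (by simp)]
    have := GaussianFourier.integral_cexp_neg_mul_sq_norm_add hb Complex.I w
    have h2 : ∀ x : EuclideanSpace ℝ (Fin n), (ENNReal.ofReal ((2 * π) ^ (-(n : ℝ) / 2) * Real.exp (-‖x‖ ^ 2 / 2))).toReal • Complex.exp (⟪x, w⟫ * Complex.I) =
      (((2 * π) ^ (-(n : ℝ) / 2) : ℝ) : ℂ) * Complex.exp (-(1/2 : ℂ) * ‖x‖ ^ 2 + Complex.I * ⟪w, x⟫) := by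
      intro x
      rw [ENNReal.toReal_ofReal (by positivity), real_inner_comm, Complex.exp_add]
      simp only [Complex.real_smul]
      push_cast
      rw [mul_assoc]
      congr 2
      · congr 1; ring
      · congr 1; ring
    simp_rw [h2]
    rw [integral_const_mul, this, ← mul_assoc]
    have h3 : ((((2 * π) ^ (-(n : ℝ) / 2) : ℝ) : ℂ)) * (π / (1/2 : ℂ)) ^ (Module.finrank ℝ (EuclideanSpace ℝ (Fin n)) / 2 : ℂ) = 1 := by
      rw [finrank_euclideanSpace_fin]
      have : (π / (1/2 : ℂ)) ^ ((n:ℂ) / 2 : ℂ) = (((2 * π) ^ ((n : ℝ) / 2) : ℝ) : ℂ) := by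
        rw [Complex.ofReal_cpow (by positivity)]
        push_cast
        congr 1
        ring
      rw [this, ← Complex.ofReal_mul, ← Real.rpow_add (by positivity)]
      have : -(n:ℝ)/2 + n/2 = 0 := by ring
      simp [this]
    rw [h3, one_mul]
    congr 1
    simp
    ring
  have hfin : IsFiniteMeasure (_root_.stdGaussian n) := by
    by_contra hnot
    have h0 := hch 0
    simp only [inner_zero_right, Complex.ofReal_zero, zero_mul, Complex.exp_zero, norm_zero] at h0
    have : ¬ Integrable (fun _ => (1:ℂ)) (_root_.stdGaussian n) := by
      rw [integrable_const_iff]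
      simp [hnot]
    rw [integral_undef this] at h0
    simp at h0
  apply Measure.ext_of_charFun
  ext w
  rw [charFun_stdGaussian, charFun_apply]
  exact hch w

instance gauss_isGaussian (n : ℕ) : ProbabilityTheory.IsGaussian (stdGaussian n) := by
  rw [gauss_eq]; infer_instance

instance gauss_isProb (n : ℕ) : IsProbabilityMeasure (stdGaussian n) := by
  rw [gauss_eq]; infer_instance

lemma gauss_abs {n : ℕ} (h : EuclideanSpace ℝ (Fin n)) (hh : ‖h‖ = 1) :
    ∫ y, |⟪h, y⟫| ∂(stdGaussian n) = Real.sqrt (2 / π) := by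
  have := ProbabilityTheory.IsGaussian.map_eq_gaussianReal (μ := stdGaussian n) (innerSL ℝ h)
  rw [gauss_eq, ProbabilityTheory.variance_dual_stdGaussian, ProbabilityTheory.integral_strongDual_stdGaussian] at this
  rw [innerSL_apply_norm, hh] at this
  rw [gauss_eq, ← integral_abs_gaussianReal_aux]
  simp only [one_pow, Real.toNNReal_one] at this
  rw [← this, integral_map (by fun_prop) (by fun_prop)]
  simp

lemma gauss_int (n : ℕ) : Integrable (fun x => ‖x‖) (stdGaussian n) :=
  (ProbabilityTheory.IsGaussian.integrable_id (μ := stdGaussian n)).norm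

lemma gauss_rot (n : ℕ) (θ : ℝ) : ((stdGaussian n).prod (stdGaussian n)).map (ContinuousLinearMap.rotation θ)
    = (stdGaussian n).prod (stdGaussian n) := by
  apply ProbabilityTheory.IsGaussian.map_rotation_eq_self
  rw [gauss_eq]; exact ProbabilityTheory.integral_id_stdGaussian

lemma angle_integral (t : ℝ) (ht : 0 < t) :
    ∫ s in (0:ℝ)..t, Real.exp (-s) / Real.sqrt (1 - Real.exp (-2 * s)) = Real.arccos (Real.exp (-t)) := by
  have hcont : Continuous fun s : ℝ => Real.arccos (Real.exp (-s)) := by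
    exact Real.continuous_arccos.comp (by fun_prop)
  have hd : ∀ s ∈ Set.Ioo 0 t, HasDerivAt (fun s : ℝ => Real.arccos (Real.exp (-s)))
      (Real.exp (-s) / Real.sqrt (1 - Real.exp (-2 * s))) s := by
    intro s hs
    have h1 : Real.exp (-s) < 1 := by
      rw [Real.exp_lt_one_iff]; linarith [hs.1]
    have h2 := (Real.hasDerivAt_arccos (x := Real.exp (-s)) (by linarith [Real.exp_pos (-s)]) h1.ne).comp s
      ((hasDerivAt_neg s).exp)
    refine h2.congr_deriv ?_
    rw [← Real.exp_nat_mul]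
    push_cast
    ring_nf
  rw [intervalIntegral.integral_eq_sub_of_hasDerivAt_of_le ht.le hcont.continuousOn hd]
  · simp
  · rw [intervalIntegrable_iff_integrableOn_Ioc_of_le ht.le]
    exact intervalIntegral.integrableOn_deriv_of_nonneg hcont.continuousOn hd (fun s _ => by positivity)

lemma gauss_ibp {n : ℕ} (φ : EuclideanSpace ℝ (Fin n) → ℝ) (hφ : IsC1b φ) (h : EuclideanSpace ℝ (Fin n)) :
    ∫ y, fderiv ℝ φ y h ∂(stdGaussian n) = ∫ y, φ y * ⟪h, y⟫ ∂(stdGaussian n) := by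
  obtain ⟨hc, K, hK⟩ := hφ
  set ρ : EuclideanSpace ℝ (Fin n) → ℝ := fun x => (2 * π) ^ (-(n : ℝ) / 2) * Real.exp (-‖x‖ ^ 2 / 2) with hρ
  have hρc : ContDiff ℝ 1 ρ := by
    have : ContDiff ℝ 1 (fun x : EuclideanSpace ℝ (Fin n) => ‖x‖ ^ 2) := contDiff_norm_sq ℝ
    fun_prop
  have hρn : ∀ x, 0 ≤ ρ x := fun x => by positivity
  have hdρ : ∀ x, fderiv ℝ ρ x h = - ⟪h, x⟫ * ρ x := by
    intro x
    have h1 : HasFDerivAt (fun x : EuclideanSpace ℝ (Fin n) => ‖x‖ ^ 2) _ x := (hasStrictFDerivAt_norm_sq x).hasFDerivAt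
    have h2 := ((h1.neg.mul_const (1/2 : ℝ)).exp).const_mul ((2 * π) ^ (-(n : ℝ) / 2))
    have h3 : HasFDerivAt ρ _ x := h2.congr_of_eventuallyEq (Filter.Eventually.of_forall fun y => by
      simp [hρ, div_eq_mul_inv])
    rw [h3.fderiv]
    simp [hρ, real_inner_comm]
    ring_nf
  have hmeas : Measurable fun x => ENNReal.ofReal (ρ x) := by fun_prop
  have hI : ∀ f : EuclideanSpace ℝ (Fin n) → ℝ, ∫ y, f y ∂(stdGaussian n) = ∫ y, f y * ρ y := by
    intro f
    rw [_root_.stdGaussian, integral_withDensity_eq_integral_toReal_smul hmeas (by simp)]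
    congr 1; ext x
    rw [ENNReal.toReal_ofReal (hρn x), smul_eq_mul, mul_comm]
  have hint : ∀ f : EuclideanSpace ℝ (Fin n) → ℝ, Integrable f (stdGaussian n) → Integrable (fun y => f y * ρ y) := by
    intro f hf
    rw [_root_.stdGaussian, integrable_withDensity_iff_integrable_smul' hmeas (by simp)] at hf
    refine hf.congr (Filter.Eventually.of_forall fun x => ?_)
    change (ENNReal.ofReal (ρ x)).toReal • f x = _
    rw [ENNReal.toReal_ofReal (hρn x), smul_eq_mul, mul_comm]
  have hφm := hc.continuous
  have hφ'm : Continuous (fun y => fderiv ℝ φ y h) := (hc.continuous_fderiv (by norm_num)).clm_apply continuous_const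
  have i1 : Integrable φ (stdGaussian n) :=
    Integrable.of_bound (C := K) hφm.aestronglyMeasurable (Filter.Eventually.of_forall fun x => (hK x).1)
  have i2 : Integrable (fun y => fderiv ℝ φ y h) (stdGaussian n) :=
    Integrable.of_bound (C := K * ‖h‖) hφ'm.aestronglyMeasurable (Filter.Eventually.of_forall fun x =>
      ((fderiv ℝ φ x).le_opNorm h).trans (by gcongr; exact (hK x).2))
  have i3 : Integrable (fun y => φ y * ⟪h, y⟫) (stdGaussian n) := by
    refine Integrable.bdd_mul (c := K) ?_ hφm.aestronglyMeasurable (Filter.Eventually.of_forall fun x => (hK x).1)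
    exact ProbabilityTheory.IsGaussian.integrable_dual (stdGaussian n) (innerSL ℝ h)
  have := integral_mul_fderiv_eq_neg_fderiv_mul_of_integrable (μ := volume) (f := φ) (g := ρ) (v := h)
    (hint _ i2) (by
      refine (hint _ i3).neg.congr (Filter.Eventually.of_forall fun x => ?_)
      simp only [hdρ, Pi.neg_apply]; ring) (hint _ i1)
      (fun x _ => hc.differentiable (by norm_num) x) (fun x _ => hρc.differentiable (by norm_num) x)
  rw [hI, hI]
  simp_rw [hdρ] at this
  rw [← neg_eq_iff_eq_neg.mpr this, ← integral_neg]
  congr 1; ext x; ring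

lemma int_mul_inner {n : ℕ} (f : EuclideanSpace ℝ (Fin n) → ℝ) (hf : Measurable f) (C : ℝ)
    (hb : ∀ x, |f x| ≤ C) (h : EuclideanSpace ℝ (Fin n)) :
    Integrable (fun x => f x * ⟪h, x⟫) (stdGaussian n) :=
  Integrable.bdd_mul (c := C) (ProbabilityTheory.IsGaussian.integrable_dual (stdGaussian n) (innerSL ℝ h))
    hf.aestronglyMeasurable (Filter.Eventually.of_forall hb)

lemma int_mul_fderiv {n : ℕ} (u : EuclideanSpace ℝ (Fin n) → ℝ) (hu : Measurable u) (C : ℝ)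
    (hb : ∀ x, |u x| ≤ C) (φ : EuclideanSpace ℝ (Fin n) → ℝ) (hφ : IsC1b φ) (h : EuclideanSpace ℝ (Fin n)) :
    Integrable (fun x => u x * fderiv ℝ φ x h) (stdGaussian n) := by
  obtain ⟨hc, K, hK⟩ := hφ
  have hφ'm : Continuous (fun y => fderiv ℝ φ y h) := (hc.continuous_fderiv (by norm_num)).clm_apply continuous_const
  refine Integrable.bdd_mul (c := C) ?_ hu.aestronglyMeasurable (Filter.Eventually.of_forall hb)
  exact Integrable.of_bound (C := K * ‖h‖) hφ'm.aestronglyMeasurable (Filter.Eventually.of_forall fun x =>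
      ((fderiv ℝ φ x).le_opNorm h).trans (by gcongr; exact (hK x).2))

lemma IsC1b.add_const {n : ℕ} {φ : EuclideanSpace ℝ (Fin n) → ℝ} (hφ : IsC1b φ) (c : ℝ) :
    IsC1b (fun x => φ x + c) := by
  obtain ⟨hc, K, hK⟩ := hφ
  refine ⟨hc.add contDiff_const, K + |c|, fun x => ⟨?_, ?_⟩⟩
  · exact (abs_add_le _ _).trans (by gcongr; exact (hK x).1)
  · rw [fderiv_add_const]; linarith [(hK x).2, abs_nonneg c]

lemma bad_direction {n : ℕ} (u : EuclideanSpace ℝ (Fin n) → ℝ)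
    (hu : Measurable u) (C : ℝ) (hb : ∀ x, |u x| ≤ C)
    (σ : Measure (EuclideanSpace ℝ (Fin n)))
    (ν : EuclideanSpace ℝ (Fin n) → EuclideanSpace ℝ (Fin n))
    (hBV : IsGaussDeriv n u σ ν) (h : EuclideanSpace ℝ (Fin n))
    (hbad : ¬ AEMeasurable (fun x => ⟪ν x, h⟫) σ)
    (φ : EuclideanSpace ℝ (Fin n) → ℝ) (hφ : IsC1b φ) :
    ∫ x, u x * fderiv ℝ φ x h ∂(stdGaussian n) = ∫ x, u x * φ x * ⟪h, x⟫ ∂(stdGaussian n) := by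
  have key : ∀ φ : EuclideanSpace ℝ (Fin n) → ℝ, IsC1b φ → (∀ x, φ x ≠ 0) →
      ∫ x, u x * fderiv ℝ φ x h ∂(stdGaussian n) = ∫ x, u x * φ x * ⟪h, x⟫ ∂(stdGaussian n) := by
    intro φ hφ hne
    rw [hBV.2.2 φ hφ h, integral_undef, neg_zero, zero_add]
    intro hi
    apply hbad
    have hm : Measurable (fun x => (φ x)⁻¹) := hφ.1.continuous.measurable.inv
    refine (hm.aemeasurable.mul hi.aemeasurable).congr (Filter.Eventually.of_forall fun x => ?_)
    simp [hne x]
  obtain ⟨hc, K, hK⟩ := id hφ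
  have hone : IsC1b (fun _ : EuclideanSpace ℝ (Fin n) => (1:ℝ)) :=
    ⟨contDiff_const, 1, fun x => by simp⟩
  have h1 := key _ hone (fun x => one_ne_zero)
  have h2 := key _ (hφ.add_const (K + 1)) (fun x => by linarith [neg_le_of_abs_le (hK x).1])
  simp only [fderiv_fun_const, Pi.zero_apply, _root_.zero_apply, mul_zero, integral_zero, mul_one] at h1
  simp only [fderiv_add_const] at h2
  rw [h2]
  have i1 := int_mul_inner u hu C hb h
  have i2 := int_mul_inner (fun x => u x * φ x) (hu.mul hc.continuous.measurable) (C * K) (fun x => by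
    rw [abs_mul]; exact mul_le_mul (hb x) (hK x).1 (abs_nonneg _) ((abs_nonneg _).trans (hb x))) h
  have : ∀ x, u x * (φ x + (K + 1)) * ⟪h, x⟫ = u x * φ x * ⟪h, x⟫ + (K+1) * (u x * ⟪h, x⟫) := fun x => by ring
  simp_rw [this]
  rw [integral_add i2 (i1.const_mul _), integral_const_mul, ← h1]
  simp

lemma reduce_meas {n : ℕ} (u : EuclideanSpace ℝ (Fin n) → ℝ)
    (hu : Measurable u) (C : ℝ) (hb : ∀ x, |u x| ≤ C)
    (σ : Measure (EuclideanSpace ℝ (Fin n)))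
    (ν : EuclideanSpace ℝ (Fin n) → EuclideanSpace ℝ (Fin n))
    (hBV : IsGaussDeriv n u σ ν) : ∃ σ' ν', Measurable ν' ∧ IsGaussDeriv n u σ' ν' ∧
      (σ' Set.univ).toReal ≤ (σ Set.univ).toReal := by
  by_cases hm : AEMeasurable ν σ
  · refine ⟨σ, hm.mk ν, hm.measurable_mk, ⟨hBV.1, ?_, ?_⟩, le_rfl⟩
    · filter_upwards [hBV.2.1, hm.ae_eq_mk] with x hx hx'
      rwa [← hx']
    · intro φ hφ h
      rw [hBV.2.2 φ hφ h]
      congr 2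
      refine integral_congr_ae ?_
      filter_upwards [hm.ae_eq_mk] with x hx
      rw [hx]
  · have hex : ∃ h0, ¬ AEMeasurable (fun x => ⟪ν x, h0⟫) σ := by
      by_contra hcon
      push Not at hcon
      apply hm
      have h1 : AEMeasurable (fun x => (WithLp.ofLp (ν x))) σ := by
        rw [aemeasurable_pi_iff]
        intro i
        have := hcon (EuclideanSpace.single i 1)
        simpa [EuclideanSpace.inner_single_right] using this
      exact (WithLp.measurable_toLp 2 _).comp_aemeasurable h1
    obtain ⟨h0, hh0⟩ := hex
    refine ⟨0, 0, measurable_const, ⟨inferInstance, by simp, ?_⟩, by simp⟩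
    intro φ hφ h
    simp only [integral_zero_measure, neg_zero, zero_add]
    by_cases hh : AEMeasurable (fun x => ⟪ν x, h⟫) σ
    · have hh1 : ¬ AEMeasurable (fun x => ⟪ν x, h + h0⟫) σ := by
        intro hh1
        apply hh0
        refine (hh1.sub hh).congr (Filter.Eventually.of_forall fun x => ?_)
        simp [inner_add_right]
      have e0 := bad_direction u hu C hb σ ν hBV h0 hh0 φ hφ
      have e1 := bad_direction u hu C hb σ ν hBV _ hh1 φ hφ
      obtain ⟨hc, K, hK⟩ := id hφ
      have i2 := int_mul_inner (fun x => u x * φ x) (hu.mul hc.continuous.measurable) (C * K) (fun x => by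
        rw [abs_mul]; exact mul_le_mul (hb x) (hK x).1 (abs_nonneg _) ((abs_nonneg _).trans (hb x)))
      have i3 := int_mul_fderiv u hu C hb φ hφ
      simp only [map_add, mul_add, inner_add_left] at e1
      rw [integral_add (i3 h) (i3 h0), integral_add (i2 h) (i2 h0), e0] at e1
      linarith
    · exact bad_direction u hu C hb σ ν hBV h hh φ hφ

/-- the key derivative estimate -/
lemma deriv_bound {n : ℕ} (u : EuclideanSpace ℝ (Fin n) → ℝ)
    (hu : Measurable u) (C : ℝ) (hb : ∀ x, |u x| ≤ C)
    (σ : Measure (EuclideanSpace ℝ (Fin n)))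
    (ν : EuclideanSpace ℝ (Fin n) → EuclideanSpace ℝ (Fin n)) (hν : Measurable ν)
    (hBV : IsGaussDeriv n u σ ν)
    (G : EuclideanSpace ℝ (Fin n) × EuclideanSpace ℝ (Fin n) → ℝ) (hG : IsC1b G) (M : ℝ)
    (hM : ∀ p, |G p| ≤ M) :
    |∫ p, u p.1 * fderiv ℝ G p (-p.2, p.1) ∂((stdGaussian n).prod (stdGaussian n))|
      ≤ M * Real.sqrt (2 / π) * (σ Set.univ).toReal := by
  obtain ⟨hc, K, hK⟩ := id hG
  have := hBV.1
  have hM0 : 0 ≤ M := (abs_nonneg _).trans (hM 0)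
  have hC0 : 0 ≤ C := (abs_nonneg _).trans (hb 0)
  have hK0 : 0 ≤ K := (abs_nonneg _).trans (hK 0).1
  set γ := stdGaussian n
  have hcf : Continuous (fderiv ℝ G) := hc.continuous_fderiv (by norm_num)
  have iN := gauss_int n
  have u1 : Measurable fun p : EuclideanSpace ℝ (Fin n) × EuclideanSpace ℝ (Fin n) => u p.1 := hu.comp measurable_fst
  have I1 : Integrable (fun p : _ × _ => u p.1 * fderiv ℝ G p (0, p.1)) (γ.prod γ) := by
    refine Integrable.mono' (g := fun p => C * K * ‖p.1‖) ((iN.comp_fst γ).const_mul _) ?_ ?_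
    · refine (u1.mul (Continuous.measurable ?_)).aestronglyMeasurable
      exact hcf.clm_apply (by fun_prop)
    · refine Filter.Eventually.of_forall fun p => ?_
      rw [norm_mul, mul_assoc]
      gcongr
      · exact hb _
      · refine ((fderiv ℝ G p).le_opNorm _).trans ?_
        gcongr
        · exact (hK p).2
        · simp
  have I2 : Integrable (fun p : _ × _ => u p.1 * fderiv ℝ G p (-p.2, 0)) (γ.prod γ) := by
    refine Integrable.mono' (g := fun p => C * K * ‖p.2‖) ((iN.comp_snd γ).const_mul _) ?_ ?_
    · refine (u1.mul (Continuous.measurable ?_)).aestronglyMeasurable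
      exact hcf.clm_apply (by fun_prop)
    · refine Filter.Eventually.of_forall fun p => ?_
      rw [norm_mul, mul_assoc]
      gcongr
      · exact hb _
      · refine ((fderiv ℝ G p).le_opNorm _).trans ?_
        gcongr
        · exact (hK p).2
        · simp
  have I3 : Integrable (fun p : _ × _ => u p.1 * G p * ⟪p.1, p.2⟫) (γ.prod γ) := by
    refine Integrable.mono' (g := fun p => C * M * (‖p.1‖ * ‖p.2‖)) ((iN.mul_prod iN).const_mul _) ?_ ?_
    · exact ((u1.mul hc.continuous.measurable).mul (Continuous.measurable (by fun_prop))).aestronglyMeasurable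
    · refine Filter.Eventually.of_forall fun p => ?_
      rw [norm_mul, norm_mul]
      gcongr
      · exact hb _
      · exact hM _
      · exact norm_inner_le_norm _ _
  have I4 : Integrable (fun p : _ × _ => ⟪ν p.1, p.2⟫) (σ.prod γ) := by
    refine Integrable.mono' (g := fun p => ‖p.2‖) (iN.comp_snd σ) ?_ ?_
    · exact ((hν.comp measurable_fst).inner measurable_snd).aestronglyMeasurable
    · have := Measure.quasiMeasurePreserving_fst (μ := σ) (ν := γ) |>.ae hBV.2.1
      filter_upwards [this] with p hp
      refine (norm_inner_le_norm _ _).trans ?_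
      rw [hp, one_mul]
  have I5 : Integrable (fun p : _ × _ => G p * ⟪ν p.1, p.2⟫) (σ.prod γ) :=
    I4.bdd_mul (c := M) hc.continuous.aestronglyMeasurable (Filter.Eventually.of_forall hM)
  have hsl1 : ∀ x y, HasFDerivAt (fun y => G (x, y)) ((fderiv ℝ G (x, y)).comp (ContinuousLinearMap.inr ℝ _ _)) y := by
    intro x y
    exact (hc.differentiable (by norm_num) (x, y)).hasFDerivAt.comp y (hasFDerivAt_prodMk_right x y)
  have hsl2 : ∀ x y, HasFDerivAt (fun x => G (x, y)) ((fderiv ℝ G (x, y)).comp (ContinuousLinearMap.inl ℝ _ _)) x := by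
    intro x y
    exact (hc.differentiable (by norm_num) (x, y)).hasFDerivAt.comp (f := fun x => (x, y)) x (hasFDerivAt_prodMk_left x y)
  have c1 : ∀ x, IsC1b (fun y => G (x, y)) := by
    intro x
    refine ⟨hc.comp (by fun_prop), K, fun y => ⟨(hK _).1, ?_⟩⟩
    rw [(hsl1 x y).fderiv]
    refine (ContinuousLinearMap.opNorm_comp_le _ _).trans ?_
    have := ContinuousLinearMap.norm_inr_le_one ℝ (EuclideanSpace ℝ (Fin n)) (EuclideanSpace ℝ (Fin n))
    calc _ ≤ K * 1 := by gcongr; exact (hK _).2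
      _ = K := mul_one K
  have c2 : ∀ y, IsC1b (fun x => G (x, y)) := by
    intro y
    refine ⟨hc.comp (by fun_prop), K, fun x => ⟨(hK _).1, ?_⟩⟩
    rw [(hsl2 x y).fderiv]
    refine (ContinuousLinearMap.opNorm_comp_le _ _).trans ?_
    have := ContinuousLinearMap.norm_inl_le_one ℝ (EuclideanSpace ℝ (Fin n)) (EuclideanSpace ℝ (Fin n))
    calc _ ≤ K * 1 := by gcongr; exact (hK _).2
      _ = K := mul_one K
  have E1 : ∫ p, u p.1 * fderiv ℝ G p (0, p.1) ∂(γ.prod γ) = ∫ p, u p.1 * G p * ⟪p.1, p.2⟫ ∂(γ.prod γ) := by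
    rw [integral_prod _ I1, integral_prod _ I3]
    congr 1; ext x
    simp only [mul_assoc]
    rw [integral_const_mul, integral_const_mul]
    congr 1
    rw [← gauss_ibp _ (c1 x) x]
    congr 1; ext y
    rw [(hsl1 x y).fderiv]
    simp
  have E2 : ∫ p, u p.1 * fderiv ℝ G p (-p.2, 0) ∂(γ.prod γ) =
      ∫ p, G p * ⟪ν p.1, p.2⟫ ∂(σ.prod γ) - ∫ p, u p.1 * G p * ⟪p.1, p.2⟫ ∂(γ.prod γ) := by
    rw [integral_prod_symm _ I2, integral_prod_symm _ I5, integral_prod_symm _ I3, ← integral_sub]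
    · congr 1; ext y
      have := hBV.2.2 _ (c2 y) (-y)
      simp only [inner_neg_right, inner_neg_left, mul_neg, integral_neg, neg_neg] at this
      simp_rw [(hsl2 _ y).fderiv] at this
      simp only [ContinuousLinearMap.comp_apply, ContinuousLinearMap.inl_apply] at this
      rw [sub_eq_add_neg]
      simp_rw [real_inner_comm y]
      simp_rw [real_inner_comm y] at this
      rw [← this]
    · exact I5.integral_prod_right
    · exact I3.integral_prod_right
  have E3 : ∫ p, u p.1 * fderiv ℝ G p (-p.2, p.1) ∂(γ.prod γ) = ∫ p, G p * ⟪ν p.1, p.2⟫ ∂(σ.prod γ) := by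
    have : ∀ p : EuclideanSpace ℝ (Fin n) × EuclideanSpace ℝ (Fin n), u p.1 * fderiv ℝ G p (-p.2, p.1) =
        u p.1 * fderiv ℝ G p (0, p.1) + u p.1 * fderiv ℝ G p (-p.2, 0) := by
      intro p
      rw [← mul_add, ← map_add]; simp
    simp_rw [this]
    rw [integral_add I1 I2, E1, E2]; ring
  rw [E3]
  calc _ ≤ ∫ p, |G p * ⟪ν p.1, p.2⟫| ∂(σ.prod γ) := abs_integral_le_integral_abs
    _ ≤ ∫ p, M * |⟪ν p.1, p.2⟫| ∂(σ.prod γ) := by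
        refine integral_mono I5.abs (I4.abs.const_mul M) fun p => ?_
        simp only [abs_mul]
        gcongr
        exact hM p
    _ = M * ∫ x, ∫ y, |⟪ν x, y⟫| ∂γ ∂σ := by rw [integral_const_mul, integral_prod _ I4.abs]
    _ = M * ∫ x, Real.sqrt (2 / π) ∂σ := by
        congr 1
        refine integral_congr_ae ?_
        filter_upwards [hBV.2.1] with x hx using gauss_abs _ hx
    _ = _ := by simp [Measure.real]; ring

lemma rot_neg {n : ℕ} (θ : ℝ) (p : EuclideanSpace ℝ (Fin n) × EuclideanSpace ℝ (Fin n)) :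
    ContinuousLinearMap.rotation (-θ) (ContinuousLinearMap.rotation θ p) = p := by
  have h := Real.cos_sq_add_sin_sq θ
  simp only [ContinuousLinearMap.rotation_apply, Real.cos_neg, Real.sin_neg]
  ext i
  · simp only [PiLp.add_apply, PiLp.smul_apply, smul_eq_mul]
    linear_combination (p.1 i) * h
  · simp only [PiLp.add_apply, PiLp.smul_apply, smul_eq_mul]
    linear_combination (p.2 i) * h

lemma rot_hasDeriv {n : ℕ} (θ : ℝ) (p : EuclideanSpace ℝ (Fin n) × EuclideanSpace ℝ (Fin n)) :
    HasDerivAt (fun θ : ℝ => ContinuousLinearMap.rotation (-θ) p)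
      (ContinuousLinearMap.rotation (-θ) (-p.2, p.1)) θ := by
  simp only [ContinuousLinearMap.rotation_apply, Real.cos_neg, Real.sin_neg, neg_neg]
  have hc := Real.hasDerivAt_cos θ
  have hs := Real.hasDerivAt_sin θ
  refine HasDerivAt.prodMk ?_ ?_
  · refine ((hc.smul_const p.1).add (hs.neg.smul_const p.2)).congr_deriv ?_
    simp only [smul_neg, neg_smul]; abel
  · refine ((hs.smul_const p.1).add (hc.smul_const p.2)).congr_deriv ?_
    simp only [smul_neg, neg_smul]; abel

lemma rot_norm {n : ℕ} (θ : ℝ) (p : EuclideanSpace ℝ (Fin n) × EuclideanSpace ℝ (Fin n)) :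
    ‖ContinuousLinearMap.rotation θ p‖ ≤ ‖p.1‖ + ‖p.2‖ := by
  have key : ∀ a b : ℝ, |a| ≤ 1 → |b| ≤ 1 → ∀ x y : EuclideanSpace ℝ (Fin n), ‖a • x + b • y‖ ≤ ‖x‖ + ‖y‖ := by
    intro a b ha hb x y
    refine (norm_add_le _ _).trans ?_
    rw [norm_smul, norm_smul]
    exact add_le_add (mul_le_of_le_one_left (norm_nonneg _) ha) (mul_le_of_le_one_left (norm_nonneg _) hb)
  rw [ContinuousLinearMap.rotation_apply, Prod.norm_mk]
  refine max_le ?_ ?_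
  · exact key _ _ (Real.abs_cos_le_one _) (Real.abs_sin_le_one _) _ _
  · exact key _ _ (by rw [abs_neg]; exact Real.abs_sin_le_one _) (Real.abs_cos_le_one _) _ _

lemma test_bound {n : ℕ} (u : EuclideanSpace ℝ (Fin n) → ℝ)
    (hu : Measurable u) (C : ℝ) (hb : ∀ x, |u x| ≤ C)
    (σ : Measure (EuclideanSpace ℝ (Fin n)))
    (ν : EuclideanSpace ℝ (Fin n) → EuclideanSpace ℝ (Fin n)) (hν : Measurable ν)
    (hBV : IsGaussDeriv n u σ ν)
    (g : EuclideanSpace ℝ (Fin n) × EuclideanSpace ℝ (Fin n) → ℝ) (hg : IsC1b g) (M : ℝ)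
    (hM : ∀ p, |g p| ≤ M) (θ : ℝ) (hθ : 0 ≤ θ) :
    |∫ p, (u p.1 - u (ContinuousLinearMap.rotation θ p).1) * g p ∂((stdGaussian n).prod (stdGaussian n))|
      ≤ M * Real.sqrt (2 / π) * (σ Set.univ).toReal * θ := by
  obtain ⟨hc, K, hK⟩ := id hg
  set γ := stdGaussian n
  have hK0 : 0 ≤ K := (abs_nonneg _).trans (hK 0).1
  have hC0 : 0 ≤ C := (abs_nonneg _).trans (hb 0)
  have iN := gauss_int n
  have hcf : Continuous (fderiv ℝ g) := hc.continuous_fderiv (by norm_num)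
  have u1 : Measurable fun p : EuclideanSpace ℝ (Fin n) × EuclideanSpace ℝ (Fin n) => u p.1 := hu.comp measurable_fst
  let G : ℝ → EuclideanSpace ℝ (Fin n) × EuclideanSpace ℝ (Fin n) → ℝ := fun θ p => g (ContinuousLinearMap.rotation (-θ) p)
  have hGf : ∀ θ p, HasFDerivAt (G θ) ((fderiv ℝ g (ContinuousLinearMap.rotation (-θ) p)).comp (ContinuousLinearMap.rotation (-θ))) p :=
    fun θ p => (hc.differentiable (by norm_num) _).hasFDerivAt.comp p (ContinuousLinearMap.hasFDerivAt _)
  have hGc : ∀ θ, IsC1b (G θ) := by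
    intro θ
    refine ⟨hc.comp (ContinuousLinearMap.contDiff _), max K (K * ‖(ContinuousLinearMap.rotation (-θ) :
      EuclideanSpace ℝ (Fin n) × EuclideanSpace ℝ (Fin n) →L[ℝ] _)‖), fun p => ⟨?_, ?_⟩⟩
    · exact ((hK _).1).trans (le_max_left _ _)
    · rw [(hGf θ p).fderiv]
      refine ((ContinuousLinearMap.opNorm_comp_le _ _).trans ?_).trans (le_max_right _ _)
      gcongr
      exact (hK _).2
  let F : ℝ → ℝ := fun θ => ∫ p, u p.1 * G θ p ∂(γ.prod γ)
  have int : ∀ f : EuclideanSpace ℝ (Fin n) × EuclideanSpace ℝ (Fin n) → EuclideanSpace ℝ (Fin n),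
      Measurable f → ∀ θ, Integrable (fun p => u (f p) * G θ p) (γ.prod γ) := by
    intro f hf θ
    refine Integrable.of_bound (C := C * K) ((hu.comp hf).mul (hGc θ).1.continuous.measurable).aestronglyMeasurable
      (Filter.Eventually.of_forall fun p => ?_)
    rw [norm_mul]
    gcongr
    · exact hb _
    · exact (hK _).1
  have hF : ∀ θ, HasDerivAt F (∫ p, u p.1 * fderiv ℝ (G θ) p (-p.2, p.1) ∂(γ.prod γ)) θ := by
    intro θ
    refine (hasDerivAt_integral_of_dominated_loc_of_deriv_le (s := Set.univ)
      (F := fun θ p => u p.1 * G θ p) (F' := fun θ p => u p.1 * fderiv ℝ (G θ) p (-p.2, p.1))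
      (bound := fun p => C * (K * (‖p.2‖ + ‖p.1‖))) Filter.univ_mem ?_ (int _ measurable_fst θ) ?_ ?_ ?_ ?_).2
    · exact Filter.Eventually.of_forall fun θ => (int _ measurable_fst θ).aestronglyMeasurable
    · refine (u1.mul (Continuous.measurable ?_)).aestronglyMeasurable
      exact ((hGc θ).1.continuous_fderiv (by norm_num)).clm_apply (by fun_prop)
    · refine Filter.Eventually.of_forall fun p θ _ => ?_
      rw [norm_mul, (hGf θ p).fderiv, ContinuousLinearMap.comp_apply]
      gcongr
      · exact hb _
      · refine (ContinuousLinearMap.le_opNorm _ _).trans ?_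
        gcongr
        · exact (hK _).2
        · refine (rot_norm _ _).trans ?_
          simp
    · exact (((iN.comp_snd γ).add (iN.comp_fst γ)).const_mul K).const_mul C
    · refine Filter.Eventually.of_forall fun p θ _ => ?_
      refine HasDerivAt.const_mul (u p.1) ?_
      rw [(hGf θ p).fderiv, ContinuousLinearMap.comp_apply]
      exact (hc.differentiable (by norm_num) _).hasFDerivAt.comp_hasDerivAt θ (rot_hasDeriv θ p)
  have hmv := Convex.norm_image_sub_le_of_norm_hasDerivWithin_le (f := F) (s := Set.univ) (x := θ) (y := 0)
    (fun θ _ => (hF θ).hasDerivWithinAt)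
    (fun θ _ => deriv_bound u hu C hb σ ν hν hBV (G θ) (hGc θ) M (fun p => hM _)) convex_univ trivial trivial
  have e0 : F 0 = ∫ p, u p.1 * g p ∂(γ.prod γ) := by
    simp [F, G, ContinuousLinearMap.rotation_apply]
  have eθ : F θ = ∫ p, u (ContinuousLinearMap.rotation θ p).1 * g p ∂(γ.prod γ) := by
    simp only [F]
    rw [← gauss_rot n θ, integral_map (by fun_prop)
      (by rw [gauss_rot]; exact (int _ measurable_fst θ).aestronglyMeasurable)]
    rw [gauss_rot]
    simp only [G, rot_neg]
  have hG0 : G 0 = g := by ext p; simp [G, ContinuousLinearMap.rotation_apply]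
  have i1 := int _ measurable_fst 0
  have i2 := int (fun p => (ContinuousLinearMap.rotation θ p).1) (by fun_prop) 0
  rw [hG0] at i1 i2
  simp_rw [sub_mul]
  rw [integral_sub i1 i2, ← e0, ← eθ]
  rw [Real.norm_eq_abs, zero_sub, norm_neg, Real.norm_of_nonneg hθ] at hmv
  exact hmv

lemma main_bound {n : ℕ} (u : EuclideanSpace ℝ (Fin n) → ℝ)
    (hu : Measurable u) (C : ℝ) (hb : ∀ x, |u x| ≤ C)
    (σ : Measure (EuclideanSpace ℝ (Fin n)))
    (ν : EuclideanSpace ℝ (Fin n) → EuclideanSpace ℝ (Fin n)) (hν : Measurable ν)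
    (hBV : IsGaussDeriv n u σ ν) (θ : ℝ) (hθ : 0 ≤ θ) :
    ∫ x, ∫ y, |u x - u (Real.cos θ • x + Real.sin θ • y)| ∂(stdGaussian n) ∂(stdGaussian n)
      ≤ θ * Real.sqrt (2 / π) * (σ Set.univ).toReal := by
  set μ := (stdGaussian n).prod (stdGaussian n) with hμ
  let w : EuclideanSpace ℝ (Fin n) × EuclideanSpace ℝ (Fin n) → ℝ :=
    fun p => u p.1 - u (ContinuousLinearMap.rotation θ p).1
  have hC0 : 0 ≤ C := (abs_nonneg _).trans (hb 0)
  have hwm : Measurable w := (hu.comp measurable_fst).sub (hu.comp (by fun_prop))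
  have hwb : ∀ p, |w p| ≤ 2 * C := fun p => by
    refine (abs_sub _ _).trans ?_
    linarith [hb p.1, hb (ContinuousLinearMap.rotation θ p).1]
  have hwi : Integrable w μ := Integrable.of_bound hwm.aestronglyMeasurable (2 * C) (Filter.Eventually.of_forall hwb)
  have e1 : ∫ x, ∫ y, |u x - u (Real.cos θ • x + Real.sin θ • y)| ∂(stdGaussian n) ∂(stdGaussian n) = ∫ p, |w p| ∂μ := by
    rw [integral_prod _ hwi.abs]
    rfl
  rw [e1]
  set B := Real.sqrt (2 / π) * (σ Set.univ).toReal * θ with hB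
  have hB0 : 0 ≤ B := by positivity
  suffices hmain : ∀ ε : ℝ, 0 < ε → ∫ p, |w p| ∂μ ≤ B + ε * (B + 4 * C) by
    have : ∫ p, |w p| ∂μ ≤ B := by
      refine le_of_forall_pos_le_add fun δ hδ => ?_
      refine (hmain (δ / (B + 4 * C + 1)) (by positivity)).trans ?_
      have : δ / (B + 4 * C + 1) * (B + 4 * C) ≤ δ := by
        rw [div_mul_eq_mul_div, div_le_iff₀ (by positivity)]
        nlinarith
      linarith
    refine this.trans (le_of_eq ?_)
    rw [hB]; ring
  intro ε hε
  let s : EuclideanSpace ℝ (Fin n) × EuclideanSpace ℝ (Fin n) → ℝ := fun p => if 0 ≤ w p then 1 else -1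
  have hsm : Measurable s := Measurable.ite (measurableSet_le measurable_const hwm) measurable_const measurable_const
  have hs1 : ∀ p, -1 ≤ s p ∧ s p ≤ 1 := fun p => by
    simp only [s]; split_ifs <;> norm_num
  have hsw : ∀ p, w p * s p = |w p| := fun p => by
    simp only [s]; split_ifs with h
    · rw [abs_of_nonneg h, mul_one]
    · rw [abs_of_neg (not_le.mp h), mul_neg_one]
  have hsi : Integrable s μ := Integrable.of_bound hsm.aestronglyMeasurable 1
    (Filter.Eventually.of_forall fun p => abs_le.mpr (hs1 p))
  obtain ⟨g0, g0c, g0e, g0cont, g0i⟩ := hsi.exists_hasCompactSupport_integral_sub_le hε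
  let g1 : EuclideanSpace ℝ (Fin n) × EuclideanSpace ℝ (Fin n) → ℝ := fun p => max (-1) (min (g0 p) 1)
  have g1cont : Continuous g1 := by fun_prop
  have g1c : HasCompactSupport g1 := g0c.comp_left (g := fun r : ℝ => max (-1) (min r 1)) (by norm_num)
  have g1b : ∀ p, |g1 p| ≤ 1 := fun p => abs_le.mpr ⟨le_max_left _ _, max_le (by norm_num) (min_le_right _ _)⟩
  have g1e : ∀ p, |s p - g1 p| ≤ |s p - g0 p| := by
    intro p
    have hs : s p = max (-1) (min (s p) 1) := by
      rw [min_eq_left (hs1 p).2, max_eq_right (hs1 p).1]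
    rw [hs]
    simp only [g1]
    refine (abs_max_sub_max_le_max _ _ _ _).trans ?_
    rw [sub_self, abs_zero, max_eq_right (abs_nonneg _), ← hs]
    refine (abs_min_sub_min_le_max _ _ _ _).trans ?_
    simp
  obtain ⟨g2, g2d, g2e, g2s⟩ := g1cont.exists_contDiff_approx 1 (ε := fun _ => ε) continuous_const (fun _ => hε)
  have g2c : HasCompactSupport g2 := g1c.mono g2s
  have g2d1 : ContDiff ℝ 1 g2 := by exact_mod_cast g2d
  have g2b : ∀ p, |g2 p| ≤ 1 + ε := by
    intro p
    have h1 := g2e p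
    rw [Real.dist_eq] at h1
    have : g2 p = (g2 p - g1 p) + g1 p := by ring
    rw [this]
    refine (abs_add_le _ _).trans ?_
    linarith [g1b p]
  have g2C : IsC1b g2 := by
    obtain ⟨K1, hK1⟩ := g2c.fderiv (𝕜 := ℝ) |>.exists_bound_of_continuous (g2d1.continuous_fderiv (by norm_num))
    exact ⟨g2d1, max (1 + ε) K1, fun p => ⟨(g2b p).trans (le_max_left _ _), (hK1 p).trans (le_max_right _ _)⟩⟩
  have tb := test_bound u hu C hb σ ν hν hBV g2 g2C (1 + ε) g2b θ hθ
  have g2i : Integrable g2 μ := g2d1.continuous.integrable_of_hasCompactSupport g2c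
  have g1i : Integrable g1 μ := g1cont.integrable_of_hasCompactSupport g1c
  have iw2 : Integrable (fun p => w p * g2 p) μ := g2i.bdd_mul (c := 2 * C) hwm.aestronglyMeasurable (Filter.Eventually.of_forall hwb)
  have ie : Integrable (fun p => 2 * C * (|s p - g0 p| + ε)) μ := (((hsi.sub g0i).abs).add (integrable_const ε)).const_mul _
  have hpt : ∀ p, |w p| ≤ w p * g2 p + 2 * C * (|s p - g0 p| + ε) := by
    intro p
    rw [← hsw p]
    have h1 : w p * s p - w p * g2 p ≤ |w p| * |s p - g2 p| := by
      rw [← abs_mul, mul_sub]; exact le_abs_self _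
    have h2 : |s p - g2 p| ≤ |s p - g0 p| + ε := by
      have h1 := g2e p
      rw [Real.dist_eq, abs_sub_comm] at h1
      have : s p - g2 p = (s p - g1 p) + (g1 p - g2 p) := by ring
      rw [this]
      refine (abs_add_le _ _).trans ?_
      linarith [g1e p]
    have h3 : |w p| * |s p - g2 p| ≤ 2 * C * (|s p - g0 p| + ε) :=
      mul_le_mul (hwb p) h2 (abs_nonneg _) (by positivity)
    linarith
  have hfin : ∫ p, |w p| ∂μ ≤ ∫ p, w p * g2 p ∂μ + 2 * C * (∫ p, |s p - g0 p| ∂μ + ε) := by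
    have isg : Integrable (fun p => |s p - g0 p|) μ := (hsi.sub g0i).abs
    refine (integral_mono hwi.abs (iw2.add ie) hpt).trans (le_of_eq ?_)
    rw [integral_add' iw2 ie, integral_const_mul, integral_add isg (integrable_const ε)]
    simp
  have h4 : ∫ p, w p * g2 p ∂μ ≤ (1 + ε) * Real.sqrt (2 / π) * (σ Set.univ).toReal * θ := (le_abs_self _).trans tb
  have h5 : 2 * C * (∫ p, |s p - g0 p| ∂μ + ε) ≤ 2 * C * (ε + ε) := by
    gcongr
    exact g0e
  have h6 : (1 + ε) * Real.sqrt (2 / π) * (σ Set.univ).toReal * θ = (1 + ε) * B := by rw [hB]; ring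
  linarith

/-- Gaussian Poincaré-type estimate for `BV` functions:
`∫∫ |u(x) − u(e^{-t}x + √(1−e^{-2t})y)| dγ(x) dγ(y) ≤ c_t |D_γ u|(ℝⁿ)`. -/
theorem poincare_BV (n : ℕ) (u : EuclideanSpace ℝ (Fin n) → ℝ)
    (hu : Measurable u) (C : ℝ) (hb : ∀ x, |u x| ≤ C)
    (σ : Measure (EuclideanSpace ℝ (Fin n)))
    (ν : EuclideanSpace ℝ (Fin n) → EuclideanSpace ℝ (Fin n))
    (hBV : IsGaussDeriv n u σ ν) (t : ℝ) (ht : 0 < t) :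
    (∫ x, ∫ y, |u x - u (Real.exp (-t) • x + Real.sqrt (1 - Real.exp (-2 * t)) • y)|
        ∂(stdGaussian n) ∂(stdGaussian n)) ≤
      (Real.sqrt (2 / π) * ∫ s in (0:ℝ)..t, Real.exp (-s) / Real.sqrt (1 - Real.exp (-2 * s)))
        * (σ Set.univ).toReal := by
  rw [angle_integral t ht]
  obtain ⟨σ', ν', hν', hBV', hle⟩ := reduce_meas u hu C hb σ ν hBV
  have h := main_bound u hu C hb σ' ν' hν' hBV' (Real.arccos (Real.exp (-t))) (Real.arccos_nonneg _)
  have hexp : Real.exp (-t) ≤ 1 := by rw [Real.exp_le_one_iff]; linarith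
  have h2 : Real.exp (-2 * t) = Real.exp (-t) ^ 2 := by
    rw [← Real.exp_nat_mul]; push_cast; ring_nf
  rw [Real.cos_arccos (by linarith [Real.exp_pos (-t)]) hexp, Real.sin_arccos, ← h2] at h
  refine h.trans ?_
  rw [mul_comm (Real.arccos _), mul_assoc, mul_assoc]
  gcongr
  exact Real.arccos_nonneg _
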